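/- Let Φ be a real-valued function on symmetric t×t real matrices that is concave, invariant under conjugation by permutation matrices (Φ(S′CS) = Φ(C) for every t×t permutation matrix S), and nondecreasing with respect to the Loewner order. Let λ0 ∈ ℝ and τ0 ∈ ℝ^t with 1_t′τ0 = 0 and τ0 ≠ 0, and let d be a design with (στ0)′ C_{d22} (στ0) > 0 for every permutation σ. Then there exists a symmetric design d* (namely the design with weights p*_s = (1/t!) ∑_σ p_{σ⁻¹∘s}) such that (στ0)′ C_{d*22} (στ0) > 0 for every σ and (1/t!) ∑_σ Φ(C_{d,στ0,λ0}) ≤ (1/t!) ∑_σ Φ(C_{d*,στ0,λ0}). -/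

import Mathlib

open Matrix MeasureTheory
open scoped Classical

noncomputable section

/-- A treatment sequence: assigns a treatment in `Fin t` to each period in `Fin p`. -/
abbrev TrtSeq (p t : ℕ) := Fin p → Fin t

/-- Treatment/period incidence matrix `T_s`. -/
def Tmat {p t : ℕ} (s : TrtSeq p t) : Matrix (Fin p) (Fin t) ℝ :=
  Matrix.of fun k i => if s k = i then 1 else 0

/-- Carryover incidence matrix `F_s`: first row zero, row `k` records the treatment
in period `k-1`. -/
def Fmat {p t : ℕ} (s : TrtSeq p t) : Matrix (Fin p) (Fin t) ℝ :=
  Matrix.of fun k i =>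
    if (k : ℕ) = 0 then 0
    else if s ⟨(k : ℕ) - 1, Nat.lt_of_le_of_lt (Nat.sub_le _ _) k.isLt⟩ = i then 1 else 0

/-- The all-ones `m × m` matrix `J_m`. -/
def Jmat (m : ℕ) : Matrix (Fin m) (Fin m) ℝ := Matrix.of fun _ _ => 1

/-- `B_t = I_t - J_t / t`. -/
def Bmat (t : ℕ) : Matrix (Fin t) (Fin t) ℝ := 1 - ((t : ℝ))⁻¹ • Jmat t

/-- `B̃ = Σ⁻¹ - Σ⁻¹ J_p Σ⁻¹ / (1_p' Σ⁻¹ 1_p)`. -/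
def Btil {p : ℕ} (S : Matrix (Fin p) (Fin p) ℝ) : Matrix (Fin p) (Fin p) ℝ :=
  S⁻¹ - (((fun _ => (1 : ℝ)) : Fin p → ℝ) ⬝ᵥ (S⁻¹ *ᵥ fun _ => (1 : ℝ)))⁻¹ •
    (S⁻¹ * Jmat p * S⁻¹)

/-- `G_1(s) = T_s`, `G_2(s) = F_s`. -/
def Gmat {p t : ℕ} (i : Fin 2) (s : TrtSeq p t) : Matrix (Fin p) (Fin t) ℝ :=
  if i = 0 then Tmat s else Fmat s

/-- An approximate design: nonnegative weights summing to one. -/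
def IsDesign {p t : ℕ} (w : TrtSeq p t → ℝ) : Prop :=
  (∀ s, 0 ≤ w s) ∧ ∑ s : TrtSeq p t, w s = 1

/-- `Ĉ_{sij} = B_t G_i(s)' B̃ G_j(s) B_t`. -/
def Chat {p t : ℕ} (S : Matrix (Fin p) (Fin p) ℝ) (s : TrtSeq p t) (i j : Fin 2) :
    Matrix (Fin t) (Fin t) ℝ :=
  Bmat t * (Gmat i s)ᵀ * Btil S * Gmat j s * Bmat t

/-- `c_{sij} = tr Ĉ_{sij}`. -/
def cseq {p t : ℕ} (S : Matrix (Fin p) (Fin p) ℝ) (s : TrtSeq p t) (i j : Fin 2) : ℝ :=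
  (Chat S s i j).trace

/-- `Ĉ_{dij} = n ∑_s p_s Ĉ_{sij}`. -/
def ChatD {p t : ℕ} (n : ℕ) (S : Matrix (Fin p) (Fin p) ℝ) (w : TrtSeq p t → ℝ)
    (i j : Fin 2) : Matrix (Fin t) (Fin t) ℝ :=
  (n : ℝ) • ∑ s : TrtSeq p t, w s • Chat S s i j

/-- `C_{dij} = Ĉ_{dij} - n (∑_s p_s G_i(s) B_t)' B̃ (∑_s p_s G_j(s) B_t)`. -/
def CD {p t : ℕ} (n : ℕ) (S : Matrix (Fin p) (Fin p) ℝ) (w : TrtSeq p t → ℝ)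
    (i j : Fin 2) : Matrix (Fin t) (Fin t) ℝ :=
  ChatD n S w i j -
    (n : ℝ) • ((∑ s : TrtSeq p t, w s • (Gmat i s * Bmat t))ᵀ * Btil S *
      (∑ s : TrtSeq p t, w s • (Gmat j s * Bmat t)))

/-- `c_{dij} = tr Ĉ_{dij} = n ∑_s p_s c_{sij}`. -/
def cD {p t : ℕ} (n : ℕ) (S : Matrix (Fin p) (Fin p) ℝ) (w : TrtSeq p t → ℝ)
    (i j : Fin 2) : ℝ :=
  (ChatD n S w i j).trace

/-- Fisher information matrix `C_{d,τ0,λ0}` for the direct treatment effects under the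
proportional model. -/
def CInfo {p t : ℕ} (n : ℕ) (S : Matrix (Fin p) (Fin p) ℝ) (w : TrtSeq p t → ℝ)
    (τ0 : Fin t → ℝ) (l0 : ℝ) : Matrix (Fin t) (Fin t) ℝ :=
  CD n S w 0 0 + l0 • (CD n S w 0 1 + CD n S w 1 0) + (l0 ^ 2) • CD n S w 1 1 -
    (τ0 ⬝ᵥ (CD n S w 1 1 *ᵥ τ0))⁻¹ •
      ((CD n S w 0 1 + l0 • CD n S w 1 1) * vecMulVec τ0 τ0 *
        (CD n S w 1 0 + l0 • CD n S w 1 1))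

/-- Permutation matrix `S_σ` with `(S_σ)_{j,i} = 1` iff `i = σ j`. -/
def Smat {t : ℕ} (σ : Equiv.Perm (Fin t)) : Matrix (Fin t) (Fin t) ℝ :=
  Matrix.of fun j i => if i = σ j then 1 else 0

/-- The relabelled sequence `σ ∘ s`. -/
def permSeq {p t : ℕ} (σ : Equiv.Perm (Fin t)) (s : TrtSeq p t) : TrtSeq p t := fun k => σ (s k)

/-- The design `σ d`, with weights `(σd)_s = p_{σ⁻¹ ∘ s}`. -/
def permDesign {p t : ℕ} (σ : Equiv.Perm (Fin t)) (w : TrtSeq p t → ℝ) : TrtSeq p t → ℝ :=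
  fun s => w (permSeq σ⁻¹ s)

/-- A design is symmetric if its weights are invariant under treatment relabelling. -/
def IsSymmetricDesign {p t : ℕ} (w : TrtSeq p t → ℝ) : Prop :=
  ∀ (σ : Equiv.Perm (Fin t)) (s : TrtSeq p t), w (permSeq σ s) = w s

/-- The symmetrized design `d*` with weights `p*_s = (1/t!) ∑_σ p_{σ⁻¹ ∘ s}`. -/
def symmetrize {p t : ℕ} (w : TrtSeq p t → ℝ) : TrtSeq p t → ℝ :=
  fun s => ((Nat.factorial t : ℝ))⁻¹ * ∑ σ : Equiv.Perm (Fin t), permDesign σ w s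

/-- `q_s(x) = c_{s11} + 2 c_{s12} x + c_{s22} x²`. -/
def qSeq {p t : ℕ} (S : Matrix (Fin p) (Fin p) ℝ) (s : TrtSeq p t) (x : ℝ) : ℝ :=
  cseq S s 0 0 + 2 * cseq S s 0 1 * x + cseq S s 1 1 * x ^ 2

/-- `q(x) = max_{s ∈ S} q_s(x)`. -/
def qMax (p t : ℕ) (S : Matrix (Fin p) (Fin p) ℝ) (x : ℝ) : ℝ :=
  sSup (Set.range fun s : TrtSeq p t => qSeq S s x)

/-- `y* = inf_x q(x)`. -/
def yStar (p t : ℕ) (S : Matrix (Fin p) (Fin p) ℝ) : ℝ := ⨅ x : ℝ, qMax p t S x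

/-- `q_d(x) = ∑_s p_s q_s(x)`. -/
def qD {p t : ℕ} (S : Matrix (Fin p) (Fin p) ℝ) (w : TrtSeq p t → ℝ) (x : ℝ) : ℝ :=
  ∑ s : TrtSeq p t, w s * qSeq S s x

/-- `x_d = -c_{d12}/c_{d22}`. -/
def xD {p t : ℕ} (n : ℕ) (S : Matrix (Fin p) (Fin p) ℝ) (w : TrtSeq p t → ℝ) : ℝ :=
  -(cD n S w 0 1) / cD n S w 1 1

/-- An exchangeable prior: a probability measure on `{τ : 1'τ = 0, τ ≠ 0}` that is
invariant under all coordinate permutations of `ℝ^t`. -/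
def IsExchangeablePrior {t : ℕ} (g : Measure (Fin t → ℝ)) : Prop :=
  IsProbabilityMeasure g ∧
    g {τ : Fin t → ℝ | ¬((∑ i, τ i) = 0 ∧ τ ≠ 0)} = 0 ∧
    ∀ σ : Equiv.Perm (Fin t), Measure.map (fun τ i => τ (σ i)) g = g

/-- `m_d(τ0) = min {ℓ' C_{d,τ0,λ0} ℓ : 1'ℓ = 0, ℓ'ℓ = 1}`. -/
def mD {p t : ℕ} (n : ℕ) (S : Matrix (Fin p) (Fin p) ℝ) (w : TrtSeq p t → ℝ) (l0 : ℝ)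
    (τ0 : Fin t → ℝ) : ℝ :=
  sInf {v : ℝ | ∃ l : Fin t → ℝ, (∑ i, l i) = 0 ∧ l ⬝ᵥ l = 1 ∧
    v = l ⬝ᵥ (CInfo n S w τ0 l0 *ᵥ l)}

/-- The E-criterion value `E_{g,λ0}(d) = ∫ m_d(τ0) g(dτ0)`. -/
def Ecrit {p t : ℕ} (n : ℕ) (S : Matrix (Fin p) (Fin p) ℝ) (g : Measure (Fin t → ℝ))
    (l0 : ℝ) (w : TrtSeq p t → ℝ) : ℝ :=
  ∫ τ0, mD n S w l0 τ0 ∂g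

/-- Competing designs for E-optimality: designs with a.e. positive `τ0' C_{d22} τ0`
and `g`-integrable `m_d`. -/
def EAdmissible {p t : ℕ} (n : ℕ) (S : Matrix (Fin p) (Fin p) ℝ) (g : Measure (Fin t → ℝ))
    (l0 : ℝ) (w : TrtSeq p t → ℝ) : Prop :=
  IsDesign w ∧ (∀ᵐ τ0 ∂g, 0 < τ0 ⬝ᵥ (CD n S w 1 1 *ᵥ τ0)) ∧
    Integrable (mD n S w l0) g

/-- `d` is `E_{g,λ0}`-optimal. -/
def EOptimal {p t : ℕ} (n : ℕ) (S : Matrix (Fin p) (Fin p) ℝ) (g : Measure (Fin t → ℝ))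
    (l0 : ℝ) (w : TrtSeq p t → ℝ) : Prop :=
  ∀ w' : TrtSeq p t → ℝ, EAdmissible n S g l0 w' → Ecrit n S g l0 w' ≤ Ecrit n S g l0 w

/-- A pseudo symmetric design: treatments equireplicated in each period,
and all `C_{dij}` completely symmetric. -/
def IsPseudoSymmetric {p t : ℕ} (n : ℕ) (S : Matrix (Fin p) (Fin p) ℝ)
    (w : TrtSeq p t → ℝ) : Prop :=
  (∀ (k : Fin p) (i : Fin t),
    (∑ s ∈ Finset.univ.filter fun s : TrtSeq p t => s k = i, w s) = 1 / (t : ℝ)) ∧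
  ∀ i j : Fin 2, ∃ a b : ℝ, CD n S w i j = a • (1 : Matrix (Fin t) (Fin t) ℝ) + b • Jmat t

/-- Eigenvalues of a (Hermitian) matrix sorted increasingly with multiplicity. -/
def sortedEigs {t : ℕ} (C : Matrix (Fin t) (Fin t) ℝ) : Fin t → ℝ :=
  if h : C.IsHermitian then (fun i => h.eigenvalues (Tuple.sort h.eigenvalues i))
  else fun _ => 0

/-- `Φ_D(C) = (∏_{i=1}^{t-1} a_i)^{1/(t-1)}` (eigenvalues sorted increasingly). -/
def PhiD {t : ℕ} (C : Matrix (Fin t) (Fin t) ℝ) : ℝ :=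
  (∏ i ∈ Finset.univ.filter fun i : Fin t => (i : ℕ) ≠ 0, sortedEigs C i) ^ (((t : ℝ) - 1)⁻¹)

/-- `Φ_A(C) = (t-1)(∑_{i=1}^{t-1} a_i⁻¹)⁻¹` if `a_1 > 0`, else `0`. -/
def PhiA {t : ℕ} (C : Matrix (Fin t) (Fin t) ℝ) : ℝ :=
  if ∀ i : Fin t, (i : ℕ) ≠ 0 → 0 < sortedEigs C i then
    ((t : ℝ) - 1) *
      (∑ i ∈ Finset.univ.filter fun i : Fin t => (i : ℕ) ≠ 0, (sortedEigs C i)⁻¹)⁻¹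
  else 0

/-- `Φ_T(C) = tr(C)/(t-1)`. -/
def PhiT {t : ℕ} (C : Matrix (Fin t) (Fin t) ℝ) : ℝ := C.trace / ((t : ℝ) - 1)

/-- The criterion value `∫ Φ(C_{d,τ0,λ0}) g(dτ0)`. -/
def PhiCrit {p t : ℕ} (n : ℕ) (S : Matrix (Fin p) (Fin p) ℝ)
    (Phi : Matrix (Fin t) (Fin t) ℝ → ℝ) (g : Measure (Fin t → ℝ)) (l0 : ℝ)
    (w : TrtSeq p t → ℝ) : ℝ :=
  ∫ τ0, Phi (CInfo n S w τ0 l0) ∂g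

/-- Competing designs for a `Φ`-criterion. -/
def PhiAdmissible {p t : ℕ} (n : ℕ) (S : Matrix (Fin p) (Fin p) ℝ)
    (Phi : Matrix (Fin t) (Fin t) ℝ → ℝ) (g : Measure (Fin t → ℝ)) (l0 : ℝ)
    (w : TrtSeq p t → ℝ) : Prop :=
  IsDesign w ∧ (∀ᵐ τ0 ∂g, 0 < τ0 ⬝ᵥ (CD n S w 1 1 *ᵥ τ0)) ∧
    Integrable (fun τ0 => Phi (CInfo n S w τ0 l0)) g

/-- `d` is `Φ_{g,λ0}`-optimal. -/
def PhiOptimal {p t : ℕ} (n : ℕ) (S : Matrix (Fin p) (Fin p) ℝ)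
    (Phi : Matrix (Fin t) (Fin t) ℝ → ℝ) (g : Measure (Fin t → ℝ)) (l0 : ℝ)
    (w : TrtSeq p t → ℝ) : Prop :=
  ∀ w' : TrtSeq p t → ℝ, PhiAdmissible n S Phi g l0 w' →
    PhiCrit n S Phi g l0 w' ≤ PhiCrit n S Phi g l0 w

/-- `H_1(s) = F_s`, `H_2(s) = T_s + λ0 F_s` (for estimating `λ`). -/
def Hmat {p t : ℕ} (l0 : ℝ) (i : Fin 2) (s : TrtSeq p t) : Matrix (Fin p) (Fin t) ℝ :=
  if i = 0 then Fmat s else Tmat s + l0 • Fmat s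

/-- `Â_{sij} = B_t H_i(s)' B̃ H_j(s) B_t`. -/
def Ahat {p t : ℕ} (S : Matrix (Fin p) (Fin p) ℝ) (l0 : ℝ) (s : TrtSeq p t) (i j : Fin 2) :
    Matrix (Fin t) (Fin t) ℝ :=
  Bmat t * (Hmat l0 i s)ᵀ * Btil S * Hmat l0 j s * Bmat t

/-- `h_{sij} = tr Â_{sij}`. -/
def hseq {p t : ℕ} (S : Matrix (Fin p) (Fin p) ℝ) (l0 : ℝ) (s : TrtSeq p t) (i j : Fin 2) : ℝ :=
  (Ahat S l0 s i j).trace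

/-- `Â_{dij} = n ∑_s p_s Â_{sij}`. -/
def AhatD {p t : ℕ} (n : ℕ) (S : Matrix (Fin p) (Fin p) ℝ) (l0 : ℝ) (w : TrtSeq p t → ℝ)
    (i j : Fin 2) : Matrix (Fin t) (Fin t) ℝ :=
  (n : ℝ) • ∑ s : TrtSeq p t, w s • Ahat S l0 s i j

/-- `A_{dij} = Â_{dij} - n (∑_s p_s H_i(s) B_t)' B̃ (∑_s p_s H_j(s) B_t)`. -/
def AD {p t : ℕ} (n : ℕ) (S : Matrix (Fin p) (Fin p) ℝ) (l0 : ℝ) (w : TrtSeq p t → ℝ)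
    (i j : Fin 2) : Matrix (Fin t) (Fin t) ℝ :=
  AhatD n S l0 w i j -
    (n : ℝ) • ((∑ s : TrtSeq p t, w s • (Hmat l0 i s * Bmat t))ᵀ * Btil S *
      (∑ s : TrtSeq p t, w s • (Hmat l0 j s * Bmat t)))

/-- `G` is a generalized inverse of `A`. -/
def IsGInv {t : ℕ} (A G : Matrix (Fin t) (Fin t) ℝ) : Prop := A * G * A = A

/-- `A_d(G) = A_{d11} - A_{d12} G A_{d21}` with `A_{d21} = A_{d12}'`. -/
def ADfun {p t : ℕ} (n : ℕ) (S : Matrix (Fin p) (Fin p) ℝ) (l0 : ℝ) (w : TrtSeq p t → ℝ)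
    (G : Matrix (Fin t) (Fin t) ℝ) : Matrix (Fin t) (Fin t) ℝ :=
  AD n S l0 w 0 0 - AD n S l0 w 0 1 * G * (AD n S l0 w 0 1)ᵀ

/-- `r_s(x) = h_{s11} + 2 h_{s12} x + h_{s22} x²`. -/
def rSeq {p t : ℕ} (S : Matrix (Fin p) (Fin p) ℝ) (l0 : ℝ) (s : TrtSeq p t) (x : ℝ) : ℝ :=
  hseq S l0 s 0 0 + 2 * hseq S l0 s 0 1 * x + hseq S l0 s 1 1 * x ^ 2

/-- `r(x) = max_s r_s(x)`. -/
def rMax (p t : ℕ) (S : Matrix (Fin p) (Fin p) ℝ) (l0 : ℝ) (x : ℝ) : ℝ :=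
  sSup (Set.range fun s : TrtSeq p t => rSeq S l0 s x)

/-- `y_0 = inf_x r(x)`. -/
def yZero (p t : ℕ) (S : Matrix (Fin p) (Fin p) ℝ) (l0 : ℝ) : ℝ := ⨅ x : ℝ, rMax p t S l0 x

/-!
A design enters the blocks `C_{dij}` only through the matrix-valued covariances of the regressors
`G_i(s) B_t` under the weights `p_s`. If the carryover effects were known to be the linear image
`K φ` of the direct effects `φ`, the information about `φ` would be such a covariance,
`I_d(K) = C_{d11} + C_{d12} K + K' C_{d21} + K' C_{d22} K`, and the law of total variance makes it
concave in `d` for the Loewner order. Completing the square in `u` gives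
`C_{d,τ0,λ0} = min_u I_d(λ0 I + τ0 u')`, a minimum attained in the Loewner order, so
`d ↦ C_{d,τ0,λ0}` is concave as well, and so is its composition with a concave monotone `Φ`.
Since `C_{σd,τ0,λ0}` and `C_{d,στ0,λ0}` are conjugate by a permutation matrix, Jensen's inequality
over the orbit of `d`, whose barycenter is `d*`, gives the claim.
-/

section WeightedCovariance

variable {ι κ m k l q r R : Type*} [Fintype ι] [Fintype κ] [Fintype m] [CommRing R]

/-- The covariance `∑ w_s X_s' M Y_s - (∑ w_s X_s)' M (∑ w_s Y_s)` of two matrix-valued families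
with respect to the bilinear form `M`, under weights `w` that need not be nonnegative or sum to
one. -/
def weightedCov (M : Matrix m m R) (w : ι → R) (X : ι → Matrix m k R) (Y : ι → Matrix m l R) :
    Matrix k l R :=
  ∑ s, w s • ((X s)ᵀ * M * Y s) - (∑ s, w s • X s)ᵀ * M * (∑ s, w s • Y s)

theorem weightedCov_transpose {M : Matrix m m R} (hM : M.IsSymm) (w : ι → R)
    (X : ι → Matrix m k R) (Y : ι → Matrix m l R) :
    (weightedCov M w X Y)ᵀ = weightedCov M w Y X := by
  simp only [weightedCov, transpose_sub, transpose_sum, transpose_smul, transpose_mul,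
    transpose_transpose, hM.eq, Matrix.mul_assoc]

theorem weightedCov_add_left (M : Matrix m m R) (w : ι → R) (X X' : ι → Matrix m k R)
    (Y : ι → Matrix m l R) :
    weightedCov M w (fun s => X s + X' s) Y = weightedCov M w X Y + weightedCov M w X' Y := by
  simp only [weightedCov, transpose_add, smul_add, Finset.sum_add_distrib, Matrix.add_mul]
  abel

theorem weightedCov_add_right (M : Matrix m m R) (w : ι → R) (X : ι → Matrix m k R)
    (Y Y' : ι → Matrix m l R) :
    weightedCov M w X (fun s => Y s + Y' s) = weightedCov M w X Y + weightedCov M w X Y' := by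
  simp only [weightedCov, smul_add, Finset.sum_add_distrib, Matrix.mul_add]
  abel

theorem weightedCov_mul_left [Fintype k] (M : Matrix m m R) (w : ι → R) (X : ι → Matrix m k R)
    (Y : ι → Matrix m l R) (K : Matrix k q R) :
    weightedCov M w (fun s => X s * K) Y = Kᵀ * weightedCov M w X Y := by
  have hX : ∑ s, w s • (X s * K) = (∑ s, w s • X s) * K := by
    simp only [Matrix.sum_mul, Matrix.smul_mul]
  rw [weightedCov, hX, weightedCov]
  simp only [Matrix.mul_sub, Matrix.mul_sum, transpose_mul, Matrix.mul_smul, Matrix.mul_assoc]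

theorem weightedCov_mul_right [Fintype l] (M : Matrix m m R) (w : ι → R) (X : ι → Matrix m k R)
    (Y : ι → Matrix m l R) (L : Matrix l r R) :
    weightedCov M w X (fun s => Y s * L) = weightedCov M w X Y * L := by
  simp only [weightedCov, Matrix.sub_mul, Matrix.sum_mul, Matrix.smul_mul, Matrix.mul_assoc]

theorem weightedCov_comp_equiv (M : Matrix m m R) (e : κ ≃ ι) (w : ι → R)
    (X : ι → Matrix m k R) (Y : ι → Matrix m l R) :
    weightedCov M (w ∘ e) (X ∘ e) (Y ∘ e) = weightedCov M w X Y := by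
  simp only [weightedCov, Function.comp_apply, e.sum_comp (fun s => w s • X s),
    e.sum_comp (fun s => w s • Y s), e.sum_comp (fun s => w s • ((X s)ᵀ * M * Y s))]

/-- The law of total variance for a mixture of two weightings. -/
theorem weightedCov_convexCombination (M : Matrix m m R) (v w : ι → R) (X : ι → Matrix m k R)
    (Y : ι → Matrix m l R) {a b : R} (hab : a + b = 1) :
    weightedCov M (a • v + b • w) X Y = a • weightedCov M v X Y + b • weightedCov M w X Y +
      (a * b) • ((∑ s, v s • X s - ∑ s, w s • X s)ᵀ * M *
        (∑ s, v s • Y s - ∑ s, w s • Y s)) := by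
  obtain rfl : b = 1 - a := eq_sub_of_add_eq' hab
  simp only [weightedCov, Pi.add_apply, Pi.smul_apply, smul_eq_mul, add_smul, mul_smul,
    Finset.sum_add_distrib, ← Finset.smul_sum, transpose_add, transpose_sub, transpose_smul,
    Matrix.add_mul, Matrix.mul_add, Matrix.sub_mul, Matrix.mul_sub, Matrix.smul_mul,
    Matrix.mul_smul]
  module

end WeightedCovariance

section LoewnerConcavity

open scoped MatrixOrder

theorem concaveOn_weightedCov {ι m k : Type*} [Fintype ι] [Fintype m] [Finite k]
    {M : Matrix m m ℝ} (hM : M.PosSemidef) (X : ι → Matrix m k ℝ) :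
    ConcaveOn ℝ Set.univ fun w => weightedCov M w X X := by
  refine ⟨convex_univ, fun v _ w _ a b ha hb hab => ?_⟩
  have hbetween := (hM.conjTranspose_mul_mul_same (∑ s, v s • X s - ∑ s, w s • X s)).smul
    (mul_nonneg ha hb)
  rw [conjTranspose_eq_transpose_of_trivial] at hbetween
  simpa only [weightedCov_convexCombination M v w X X hab, Matrix.le_iff, add_sub_cancel_left]
    using hbetween

theorem concaveOn_comp_of_mapsTo {𝕜 E β α : Type*} [Semiring 𝕜] [PartialOrder 𝕜]
    [AddCommMonoid E] [AddCommMonoid β] [PartialOrder β] [AddCommMonoid α] [PartialOrder α]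
    [SMul 𝕜 E] [SMul 𝕜 β] [SMul 𝕜 α] {s : Set E} {u : Set β} {f : E → β} {g : β → α}
    (hg : ConcaveOn 𝕜 u g) (hg_mono : MonotoneOn g u) (hf : ConcaveOn 𝕜 s f)
    (hmaps : Set.MapsTo f s u) : ConcaveOn 𝕜 s (g ∘ f) :=
  ⟨hf.1, fun _ hx _ hy _ _ ha hb hab =>
    (hg.2 (hmaps hx) (hmaps hy) ha hb hab).trans <|
      hg_mono (hg.1 (hmaps hx) (hmaps hy) ha hb hab) (hmaps (hf.1 hx hy ha hb hab))
        (hf.2 hx hy ha hb hab)⟩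

theorem convex_setOf_isSymm (k : Type*) : Convex ℝ {A : Matrix k k ℝ | A.IsSymm} :=
  fun _ hA _ hB a b _ _ _ => (hA.smul a).add (hB.smul b)

end LoewnerConcavity

theorem dotProduct_transpose_mul_mul_mulVec {m k R : Type*} [Fintype m] [Fintype k] [CommRing R]
    (P : Matrix m k R) (A : Matrix m m R) (x : k → R) :
    x ⬝ᵥ ((Pᵀ * A * P) *ᵥ x) = (P *ᵥ x) ⬝ᵥ (A *ᵥ (P *ᵥ x)) := by
  rw [← mulVec_mulVec, ← mulVec_mulVec, dotProduct_mulVec, vecMul_transpose]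

theorem Jmat_eq_vecMulVec (m : ℕ) : Jmat m = vecMulVec 1 1 := by
  ext i j
  simp [Jmat]

theorem Jmat_transpose (m : ℕ) : (Jmat m)ᵀ = Jmat m := by
  rw [Jmat_eq_vecMulVec, transpose_vecMulVec]

theorem Bmat_transpose (t : ℕ) : (Bmat t)ᵀ = Bmat t := by
  simp only [Bmat, transpose_sub, transpose_one, transpose_smul, Jmat_transpose]

theorem Jmat_mul_mul_Jmat {m : ℕ} (A : Matrix (Fin m) (Fin m) ℝ) :
    Jmat m * A * Jmat m = (1 ⬝ᵥ (A *ᵥ 1)) • Jmat m := by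
  rw [Jmat_eq_vecMulVec, vecMulVec_mul, vecMulVec_mul_vecMulVec, vecMulVec_smul,
    dotProduct_mulVec]

theorem Btil_eq_transpose_mul_mul {p : ℕ} {S : Matrix (Fin p) (Fin p) ℝ} (hS : S.IsSymm) :
    Btil S = (1 - (1 ⬝ᵥ (S⁻¹ *ᵥ 1))⁻¹ • (Jmat p * S⁻¹))ᵀ * S⁻¹ *
      (1 - (1 ⬝ᵥ (S⁻¹ *ᵥ 1))⁻¹ • (Jmat p * S⁻¹)) := by
  have hJ : Jmat p * (S⁻¹ * (Jmat p * S⁻¹)) = (1 ⬝ᵥ (S⁻¹ *ᵥ 1)) • (Jmat p * S⁻¹) := by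
    rw [← Matrix.mul_assoc, ← Matrix.mul_assoc, Jmat_mul_mul_Jmat, Matrix.smul_mul]
  change S⁻¹ - (1 ⬝ᵥ (S⁻¹ *ᵥ 1))⁻¹ • (S⁻¹ * Jmat p * S⁻¹) = _
  set α := 1 ⬝ᵥ (S⁻¹ *ᵥ 1)
  have hα : α⁻¹ * (α⁻¹ * α) = α⁻¹ := by simpa [mul_assoc] using mul_self_mul_inv α⁻¹
  simp only [transpose_sub, transpose_one, transpose_smul, transpose_mul, Jmat_transpose,
    hS.inv.eq, Matrix.sub_mul, Matrix.mul_sub, Matrix.one_mul, Matrix.mul_one, Matrix.smul_mul,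
    Matrix.mul_smul, Matrix.mul_assoc, hJ, smul_sub, smul_smul, hα]
  abel

theorem Btil_posSemidef {p : ℕ} {S : Matrix (Fin p) (Fin p) ℝ} (hS : S.PosSemidef) :
    (Btil S).PosSemidef := by
  rw [Btil_eq_transpose_mul_mul (isHermitian_iff_isSymm.mp hS.isHermitian),
    ← conjTranspose_eq_transpose_of_trivial]
  exact hS.inv.conjTranspose_mul_mul_same _

section Information

open scoped MatrixOrder

variable {p t n : ℕ} {S : Matrix (Fin p) (Fin p) ℝ}

theorem CD_eq_weightedCov (n : ℕ) (S : Matrix (Fin p) (Fin p) ℝ) (w : TrtSeq p t → ℝ)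
    (i j : Fin 2) :
    CD n S w i j =
      weightedCov ((n : ℝ) • Btil S) w (fun s => Gmat i s * Bmat t)
        (fun s => Gmat j s * Bmat t) := by
  simp only [CD, ChatD, Chat, weightedCov, transpose_mul, Bmat_transpose, Matrix.smul_mul,
    Matrix.mul_smul, Finset.smul_sum, smul_comm (n : ℝ), Matrix.mul_assoc]

theorem smul_Btil_posSemidef (n : ℕ) (hS : S.PosSemidef) : ((n : ℝ) • Btil S).PosSemidef :=
  (Btil_posSemidef hS).smul n.cast_nonneg

theorem CD_transpose (hS : S.PosSemidef) (w : TrtSeq p t → ℝ) (i j : Fin 2) :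
    (CD n S w i j)ᵀ = CD n S w j i := by
  simp only [CD_eq_weightedCov]
  exact weightedCov_transpose
    (isHermitian_iff_isSymm.mp (smul_Btil_posSemidef n hS).isHermitian) w _ _

/-- The information matrix for the direct effects `φ` in the model whose carryover effects are
`K φ` with `K` known. -/
def linearCarryoverInfo (n : ℕ) (S : Matrix (Fin p) (Fin p) ℝ) (w : TrtSeq p t → ℝ)
    (K : Matrix (Fin t) (Fin t) ℝ) : Matrix (Fin t) (Fin t) ℝ :=
  CD n S w 0 0 + CD n S w 0 1 * K + Kᵀ * CD n S w 1 0 + Kᵀ * CD n S w 1 1 * K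

theorem linearCarryoverInfo_eq_weightedCov (n : ℕ) (S : Matrix (Fin p) (Fin p) ℝ)
    (w : TrtSeq p t → ℝ) (K : Matrix (Fin t) (Fin t) ℝ) :
    linearCarryoverInfo n S w K =
      weightedCov ((n : ℝ) • Btil S) w (fun s => Gmat 0 s * Bmat t + Gmat 1 s * Bmat t * K)
        (fun s => Gmat 0 s * Bmat t + Gmat 1 s * Bmat t * K) := by
  simp only [linearCarryoverInfo, CD_eq_weightedCov, weightedCov_add_left, weightedCov_add_right,
    weightedCov_mul_left (K := K), weightedCov_mul_right (L := K), Matrix.add_mul,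
    Matrix.mul_assoc Kᵀ]
  abel

theorem concaveOn_linearCarryoverInfo (n : ℕ) (hS : S.PosSemidef) (K : Matrix (Fin t) (Fin t) ℝ) :
    ConcaveOn ℝ Set.univ fun w : TrtSeq p t → ℝ => linearCarryoverInfo n S w K := by
  simp only [linearCarryoverInfo_eq_weightedCov]
  exact concaveOn_weightedCov (smul_Btil_posSemidef n hS) _

theorem CInfo_eq_sub_vecMulVec (hS : S.PosSemidef) (w : TrtSeq p t → ℝ) (τ : Fin t → ℝ) (l0 : ℝ) :
    CInfo n S w τ l0 =
      linearCarryoverInfo n S w (l0 • 1) - (τ ⬝ᵥ (CD n S w 1 1 *ᵥ τ))⁻¹ •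
        vecMulVec ((CD n S w 0 1 + l0 • CD n S w 1 1) *ᵥ τ)
          ((CD n S w 0 1 + l0 • CD n S w 1 1) *ᵥ τ) := by
  have hE : CD n S w 1 0 + l0 • CD n S w 1 1 = (CD n S w 0 1 + l0 • CD n S w 1 1)ᵀ := by
    rw [transpose_add, transpose_smul, CD_transpose hS, CD_transpose hS]
  rw [CInfo, hE, mul_vecMulVec, vecMulVec_mul, vecMul_transpose]
  congr 1
  simp only [linearCarryoverInfo, transpose_smul, transpose_one, Matrix.smul_mul, Matrix.mul_smul,
    Matrix.one_mul, Matrix.mul_one]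
  module

theorem linearCarryoverInfo_add_vecMulVec (hS : S.PosSemidef) (w : TrtSeq p t → ℝ)
    (τ u : Fin t → ℝ) (l0 : ℝ) :
    linearCarryoverInfo n S w (l0 • 1 + vecMulVec τ u) =
      linearCarryoverInfo n S w (l0 • 1) +
        vecMulVec ((CD n S w 0 1 + l0 • CD n S w 1 1) *ᵥ τ) u +
        vecMulVec u ((CD n S w 0 1 + l0 • CD n S w 1 1) *ᵥ τ) +
        (τ ⬝ᵥ (CD n S w 1 1 *ᵥ τ)) • vecMulVec u u := by
  have h10 : τ ᵥ* CD n S w 1 0 = CD n S w 0 1 *ᵥ τ := by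
    rw [← CD_transpose hS, vecMul_transpose]
  have h11 : τ ᵥ* CD n S w 1 1 = CD n S w 1 1 *ᵥ τ := by
    conv_lhs => rw [← CD_transpose hS, vecMul_transpose]
  simp only [linearCarryoverInfo, transpose_add, transpose_smul, transpose_one,
    transpose_vecMulVec, Matrix.add_mul, Matrix.mul_add, Matrix.smul_mul, Matrix.mul_smul,
    Matrix.one_mul, Matrix.mul_one, mul_vecMulVec, vecMulVec_mul, vecMulVec_mulVec, add_mulVec,
    smul_mulVec, h10, h11, add_vecMulVec, vecMulVec_add, smul_vecMulVec, vecMulVec_smul,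
    op_smul_eq_smul, dotProduct_comm (CD n S w 1 1 *ᵥ τ)]
  module

theorem linearCarryoverInfo_eq_CInfo_add (hS : S.PosSemidef) {w : TrtSeq p t → ℝ} {τ : Fin t → ℝ}
    (hτ : τ ⬝ᵥ (CD n S w 1 1 *ᵥ τ) ≠ 0) (u : Fin t → ℝ) (l0 : ℝ) :
    linearCarryoverInfo n S w (l0 • 1 + vecMulVec τ u) =
      CInfo n S w τ l0 + (τ ⬝ᵥ (CD n S w 1 1 *ᵥ τ)) •
        vecMulVec
          (u + (τ ⬝ᵥ (CD n S w 1 1 *ᵥ τ))⁻¹ • ((CD n S w 0 1 + l0 • CD n S w 1 1) *ᵥ τ))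
          (u + (τ ⬝ᵥ (CD n S w 1 1 *ᵥ τ))⁻¹ • ((CD n S w 0 1 + l0 • CD n S w 1 1) *ᵥ τ)) := by
  rw [linearCarryoverInfo_add_vecMulVec hS, CInfo_eq_sub_vecMulVec hS]
  simp only [add_vecMulVec, vecMulVec_add, smul_vecMulVec, vecMulVec_smul, smul_add, smul_smul,
    mul_inv_cancel_left₀ hτ, mul_inv_cancel₀ hτ, one_smul]
  abel

theorem CInfo_le_linearCarryoverInfo (hS : S.PosSemidef) {w : TrtSeq p t → ℝ} {τ : Fin t → ℝ}
    (hτ : 0 < τ ⬝ᵥ (CD n S w 1 1 *ᵥ τ)) (u : Fin t → ℝ) (l0 : ℝ) :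
    CInfo n S w τ l0 ≤ linearCarryoverInfo n S w (l0 • 1 + vecMulVec τ u) := by
  rw [linearCarryoverInfo_eq_CInfo_add hS hτ.ne', Matrix.le_iff, add_sub_cancel_left]
  exact (posSemidef_vecMulVec_self_star _).smul hτ.le

theorem exists_linearCarryoverInfo_eq_CInfo (hS : S.PosSemidef) {w : TrtSeq p t → ℝ}
    {τ : Fin t → ℝ} (hτ : τ ⬝ᵥ (CD n S w 1 1 *ᵥ τ) ≠ 0) (l0 : ℝ) :
    ∃ u, linearCarryoverInfo n S w (l0 • 1 + vecMulVec τ u) = CInfo n S w τ l0 :=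
  ⟨-((τ ⬝ᵥ (CD n S w 1 1 *ᵥ τ))⁻¹ • ((CD n S w 0 1 + l0 • CD n S w 1 1) *ᵥ τ)), by
    rw [linearCarryoverInfo_eq_CInfo_add hS hτ, neg_add_cancel, zero_vecMulVec, smul_zero,
      add_zero]⟩

theorem CInfo_isSymm (hS : S.PosSemidef) (w : TrtSeq p t → ℝ) (τ : Fin t → ℝ) (l0 : ℝ) :
    (CInfo n S w τ l0).IsSymm := by
  simp only [IsSymm, CInfo_eq_sub_vecMulVec hS, linearCarryoverInfo, transpose_sub, transpose_add,
    transpose_smul, transpose_one, transpose_vecMulVec, CD_transpose hS,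
    Matrix.mul_smul, Matrix.smul_mul, Matrix.mul_one, Matrix.one_mul]
  abel

theorem concaveOn_dotProduct_CD_mulVec (n : ℕ) (hS : S.PosSemidef) (i : Fin 2) (τ : Fin t → ℝ) :
    ConcaveOn ℝ Set.univ fun w : TrtSeq p t → ℝ => τ ⬝ᵥ (CD n S w i i *ᵥ τ) := by
  refine ⟨convex_univ, fun v _ w _ a b ha hb hab => ?_⟩
  have hle := (concaveOn_weightedCov (smul_Btil_posSemidef n hS)
    fun s : TrtSeq p t => Gmat i s * Bmat t).2 (Set.mem_univ v) (Set.mem_univ w) ha hb hab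
  simp only [← CD_eq_weightedCov] at hle
  simpa [sub_mulVec, add_mulVec, smul_mulVec] using
    (Matrix.le_iff.mp hle).dotProduct_mulVec_nonneg τ

theorem convex_setOf_dotProduct_CD_mulVec_pos (n : ℕ) (hS : S.PosSemidef) (i : Fin 2)
    (τ : Fin t → ℝ) :
    Convex ℝ {w : TrtSeq p t → ℝ | 0 < τ ⬝ᵥ (CD n S w i i *ᵥ τ)} := by
  simpa using (concaveOn_dotProduct_CD_mulVec n hS i τ).convex_gt 0

theorem concaveOn_CInfo (n : ℕ) (hS : S.PosSemidef) (τ : Fin t → ℝ) (l0 : ℝ) :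
    ConcaveOn ℝ {w : TrtSeq p t → ℝ | 0 < τ ⬝ᵥ (CD n S w 1 1 *ᵥ τ)}
      fun w => CInfo n S w τ l0 := by
  have hconvex := convex_setOf_dotProduct_CD_mulVec_pos (p := p) n hS 1 τ
  refine ⟨hconvex, fun v hv w hw a b ha hb hab => ?_⟩
  obtain ⟨u, hu⟩ := exists_linearCarryoverInfo_eq_CInfo hS (hconvex hv hw ha hb hab).ne' l0
  calc a • CInfo n S v τ l0 + b • CInfo n S w τ l0
      ≤ a • linearCarryoverInfo n S v (l0 • 1 + vecMulVec τ u) +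
          b • linearCarryoverInfo n S w (l0 • 1 + vecMulVec τ u) := by
        gcongr
        · exact CInfo_le_linearCarryoverInfo hS hv u l0
        · exact CInfo_le_linearCarryoverInfo hS hw u l0
    _ ≤ linearCarryoverInfo n S (a • v + b • w) (l0 • 1 + vecMulVec τ u) :=
        (concaveOn_linearCarryoverInfo n hS _).2 (Set.mem_univ v) (Set.mem_univ w) ha hb hab
    _ = CInfo n S (a • v + b • w) τ l0 := hu

theorem concaveOn_comp_CInfo (n : ℕ) (hS : S.PosSemidef) (τ : Fin t → ℝ) (l0 : ℝ)
    {Φ : Matrix (Fin t) (Fin t) ℝ → ℝ} (hconc : ConcaveOn ℝ {A | A.IsSymm} Φ)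
    (hmono : MonotoneOn Φ {A | A.IsSymm}) :
    ConcaveOn ℝ {w : TrtSeq p t → ℝ | 0 < τ ⬝ᵥ (CD n S w 1 1 *ᵥ τ)}
      fun w => Φ (CInfo n S w τ l0) :=
  concaveOn_comp_of_mapsTo hconc hmono (concaveOn_CInfo n hS τ l0)
    fun w _ => CInfo_isSymm hS w τ l0

end Information

section Relabelling

variable {p t : ℕ}

theorem Smat_eq_permMatrix (σ : Equiv.Perm (Fin t)) : Smat σ = σ.permMatrix ℝ := by
  ext j i
  simp [Smat, PEquiv.toMatrix_apply, eq_comm]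

theorem Bmat_mul_Smat (σ : Equiv.Perm (Fin t)) : Bmat t * Smat σ = Smat σ * Bmat t := by
  rw [Smat_eq_permMatrix, Equiv.Perm.permMatrix, PEquiv.mul_toMatrix_toPEquiv,
    PEquiv.toMatrix_toPEquiv_mul]
  ext i j
  simp [Bmat, Jmat, one_apply, Equiv.eq_symm_apply]

theorem Gmat_permSeq (σ : Equiv.Perm (Fin t)) (i : Fin 2) (s : TrtSeq p t) :
    Gmat i (permSeq σ s) = Gmat i s * Smat σ := by
  rw [Smat_eq_permMatrix, Equiv.Perm.permMatrix, PEquiv.mul_toMatrix_toPEquiv]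
  ext k j
  fin_cases i <;> simp [Gmat, Tmat, Fmat, permSeq, Equiv.eq_symm_apply] <;> congr

/-- Relabelling of treatments by `σ`, as a permutation of the set of treatment sequences. -/
def permSeqEquiv (σ : Equiv.Perm (Fin t)) : TrtSeq p t ≃ TrtSeq p t :=
  Equiv.arrowCongr (Equiv.refl _) σ

theorem permDesign_comp_permSeqEquiv (σ : Equiv.Perm (Fin t)) (w : TrtSeq p t → ℝ) :
    permDesign σ w ∘ permSeqEquiv σ = w :=
  funext fun s => congrArg w ((permSeqEquiv σ).symm_apply_apply s)

theorem CD_permDesign (n : ℕ) (S : Matrix (Fin p) (Fin p) ℝ) (w : TrtSeq p t → ℝ) (i j : Fin 2)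
    (σ : Equiv.Perm (Fin t)) :
    CD n S (permDesign σ w) i j = (Smat σ)ᵀ * CD n S w i j * Smat σ := by
  have hG (i : Fin 2) : (fun s : TrtSeq p t => Gmat i s * Bmat t) ∘ permSeqEquiv σ =
      fun s => Gmat i s * Bmat t * Smat σ :=
    funext fun s => by
      rw [Matrix.mul_assoc, Bmat_mul_Smat, ← Matrix.mul_assoc, ← Gmat_permSeq]; rfl
  rw [CD_eq_weightedCov, CD_eq_weightedCov, ← weightedCov_comp_equiv _ (permSeqEquiv σ),
    permDesign_comp_permSeqEquiv, hG, hG, weightedCov_mul_left, weightedCov_mul_right,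
    Matrix.mul_assoc]

theorem dotProduct_CD_permDesign_mulVec (n : ℕ) (S : Matrix (Fin p) (Fin p) ℝ)
    (w : TrtSeq p t → ℝ) (i j : Fin 2) (σ : Equiv.Perm (Fin t)) (τ : Fin t → ℝ) :
    τ ⬝ᵥ (CD n S (permDesign σ w) i j *ᵥ τ) =
      (Smat σ *ᵥ τ) ⬝ᵥ (CD n S w i j *ᵥ (Smat σ *ᵥ τ)) := by
  rw [CD_permDesign, dotProduct_transpose_mul_mul_mulVec]

theorem CInfo_permDesign (n : ℕ) (S : Matrix (Fin p) (Fin p) ℝ) (w : TrtSeq p t → ℝ)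
    (τ : Fin t → ℝ) (l0 : ℝ) (σ : Equiv.Perm (Fin t)) :
    CInfo n S (permDesign σ w) τ l0 =
      (Smat σ)ᵀ * CInfo n S w (Smat σ *ᵥ τ) l0 * Smat σ := by
  have hττ : vecMulVec (Smat σ *ᵥ τ) (Smat σ *ᵥ τ) = Smat σ * vecMulVec τ τ * (Smat σ)ᵀ := by
    rw [mul_vecMulVec, vecMulVec_mul, vecMul_transpose]
  rw [CInfo, dotProduct_CD_permDesign_mulVec]
  simp only [CD_permDesign, hττ, CInfo, Matrix.mul_add, Matrix.add_mul, Matrix.mul_sub,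
    Matrix.sub_mul, Matrix.mul_smul, Matrix.smul_mul, Matrix.mul_assoc, smul_add]

theorem isSymmetricDesign_symmetrize (w : TrtSeq p t → ℝ) :
    IsSymmetricDesign (symmetrize w) := by
  intro σ s
  unfold symmetrize
  congr 1
  rw [← Equiv.sum_comp (Equiv.mulLeft σ)]
  refine Finset.sum_congr rfl fun ρ _ => congrArg w (funext fun k => ?_)
  simp [permSeq]

theorem permDesign_eq_self {w : TrtSeq p t → ℝ} (hw : IsSymmetricDesign w)
    (σ : Equiv.Perm (Fin t)) : permDesign σ w = w :=
  funext (hw σ⁻¹)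

theorem symmetrize_eq_sum_smul (w : TrtSeq p t → ℝ) :
    symmetrize w = ∑ σ : Equiv.Perm (Fin t), ((Nat.factorial t : ℝ))⁻¹ • permDesign σ w := by
  ext s
  simp [symmetrize, Finset.mul_sum]

theorem sum_perm_inv_factorial (t : ℕ) :
    ∑ _σ : Equiv.Perm (Fin t), ((Nat.factorial t : ℝ))⁻¹ = 1 := by
  simp [Fintype.card_perm, Nat.factorial_ne_zero]

theorem symmetrize_mem_of_convex {s : Set (TrtSeq p t → ℝ)} (hs : Convex ℝ s)
    {w : TrtSeq p t → ℝ} (hw : ∀ σ, permDesign σ w ∈ s) : symmetrize w ∈ s := by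
  rw [symmetrize_eq_sum_smul]
  exact hs.sum_mem (fun _ _ => by positivity) (sum_perm_inv_factorial t) fun σ _ => hw σ

theorem average_permDesign_le_symmetrize {s : Set (TrtSeq p t → ℝ)} {f : (TrtSeq p t → ℝ) → ℝ}
    (hf : ConcaveOn ℝ s f) {w : TrtSeq p t → ℝ} (hw : ∀ σ, permDesign σ w ∈ s) :
    ((Nat.factorial t : ℝ))⁻¹ * ∑ σ : Equiv.Perm (Fin t), f (permDesign σ w) ≤
      f (symmetrize w) := by
  rw [symmetrize_eq_sum_smul, Finset.mul_sum]
  exact hf.le_map_sum (fun _ _ => by positivity) (sum_perm_inv_factorial t) fun σ _ => hw σ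

end Relabelling

open scoped MatrixOrder in
theorem stmt2_general {p t : ℕ} (n : ℕ) {S : Matrix (Fin p) (Fin p) ℝ} (hS : S.PosDef)
    {Φ : Matrix (Fin t) (Fin t) ℝ → ℝ} (hconc : ConcaveOn ℝ {A | A.IsSymm} Φ)
    (hinv : ∀ (σ : Equiv.Perm (Fin t)) (C : Matrix (Fin t) (Fin t) ℝ), C.IsSymm →
      Φ ((Smat σ)ᵀ * C * Smat σ) = Φ C)
    (hmono : MonotoneOn Φ {A | A.IsSymm}) (l0 : ℝ) (τ0 : Fin t → ℝ) (w : TrtSeq p t → ℝ)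
    (hC : ∀ σ : Equiv.Perm (Fin t),
      0 < (Smat σ *ᵥ τ0) ⬝ᵥ (CD n S w 1 1 *ᵥ (Smat σ *ᵥ τ0))) :
    IsSymmetricDesign (symmetrize w) ∧
    (∀ σ : Equiv.Perm (Fin t),
      0 < (Smat σ *ᵥ τ0) ⬝ᵥ (CD n S (symmetrize w) 1 1 *ᵥ (Smat σ *ᵥ τ0))) ∧
    ((Nat.factorial t : ℝ))⁻¹ *
        ∑ σ : Equiv.Perm (Fin t), Φ (CInfo n S w (Smat σ *ᵥ τ0) l0) ≤
      ((Nat.factorial t : ℝ))⁻¹ *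
        ∑ σ : Equiv.Perm (Fin t), Φ (CInfo n S (symmetrize w) (Smat σ *ᵥ τ0) l0) := by
  have hfix := permDesign_eq_self (isSymmetricDesign_symmetrize w)
  have hrelabel (v : TrtSeq p t → ℝ) (σ : Equiv.Perm (Fin t)) :
      Φ (CInfo n S v (Smat σ *ᵥ τ0) l0) = Φ (CInfo n S (permDesign σ v) τ0 l0) := by
    rw [CInfo_permDesign, hinv σ _ (CInfo_isSymm hS.posSemidef _ _ _)]
  simp only [← dotProduct_CD_permDesign_mulVec] at hC ⊢
  simp only [hrelabel, hfix]
  refine ⟨isSymmetricDesign_symmetrize w, fun _ => symmetrize_mem_of_convex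
    (convex_setOf_dotProduct_CD_mulVec_pos n hS.posSemidef 1 τ0) hC, ?_⟩
  rw [Finset.mul_sum (f := fun _ => Φ (CInfo n S (symmetrize w) τ0 l0)), ← Finset.sum_mul,
    sum_perm_inv_factorial, one_mul]
  exact average_permDesign_le_symmetrize
    (concaveOn_comp_CInfo n hS.posSemidef τ0 l0 hconc hmono) hC

/-- for any concave, permutation-invariant, Loewner-monotone criterion,
the symmetrized design is at least as good as `d` for the discrete symmetrized prior. -/
theorem stmt2 (p t n : ℕ) (hp : 2 ≤ p) (ht : 3 ≤ t) (hn : 1 ≤ n)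
    (S : Matrix (Fin p) (Fin p) ℝ) (hS : S.PosDef)
    (Phi : Matrix (Fin t) (Fin t) ℝ → ℝ)
    (hconc : ∀ A B : Matrix (Fin t) (Fin t) ℝ, A.IsSymm → B.IsSymm →
      ∀ a b : ℝ, 0 ≤ a → 0 ≤ b → a + b = 1 →
        a * Phi A + b * Phi B ≤ Phi (a • A + b • B))
    (hinv : ∀ (σ : Equiv.Perm (Fin t)) (C : Matrix (Fin t) (Fin t) ℝ),
      Phi ((Smat σ)ᵀ * C * Smat σ) = Phi C)
    (hmono : ∀ A B : Matrix (Fin t) (Fin t) ℝ, A.IsSymm → B.IsSymm →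
      (B - A).PosSemidef → Phi A ≤ Phi B)
    (l0 : ℝ) (τ0 : Fin t → ℝ) (hτsum : (∑ i, τ0 i) = 0) (hτ0 : τ0 ≠ 0)
    (w : TrtSeq p t → ℝ) (hw : IsDesign w)
    (hC : ∀ σ : Equiv.Perm (Fin t),
      0 < (Smat σ *ᵥ τ0) ⬝ᵥ (CD n S w 1 1 *ᵥ (Smat σ *ᵥ τ0))) :
    IsSymmetricDesign (symmetrize w) ∧
    (∀ σ : Equiv.Perm (Fin t),
      0 < (Smat σ *ᵥ τ0) ⬝ᵥ (CD n S (symmetrize w) 1 1 *ᵥ (Smat σ *ᵥ τ0))) ∧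
    ((Nat.factorial t : ℝ))⁻¹ *
        ∑ σ : Equiv.Perm (Fin t), Phi (CInfo n S w (Smat σ *ᵥ τ0) l0) ≤
      ((Nat.factorial t : ℝ))⁻¹ *
        ∑ σ : Equiv.Perm (Fin t), Phi (CInfo n S (symmetrize w) (Smat σ *ᵥ τ0) l0) := by
  exact stmt2_general n hS
    ⟨convex_setOf_isSymm _, fun A hA B hB a b ha hb hab => hconc A B hA hB a b ha hb hab⟩
    (fun σ C _ => hinv σ C) (fun A hA B hB hAB => hmono A B hA hB hAB) l0 τ0 w hC
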